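/- Let c_1, …, c_8 ∈ ℂ^{16 × 16} be Majorana operators (n = 4), let a_k = (c_{2k−1} + i c_{2k})/2 and n_k = a_k† a_k, and let H = −(1/2)·Σ_{i=1}^{3}(a_i† a_{i+1} + a_{i+1}† a_i) + Σ_{i=1}^{3}(1/4 − n_i n_{i+1}) + (1/2)(n_1 − 1/2) + (n_2 − 1/2) + (n_3 − 1/2) + (1/2)(n_4 − 1/2). Then for every fermionic Gaussian state ρ, tr(ρ H) ≤ 0.99904 · λ_max(H). -/

import Mathlib

open Matrix
open scoped ComplexOrder

noncomputable section

/-- A family of `2n` Majorana operators on `ℂ^(2^n)`. -/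
def IsMajorana (n : ℕ) (c : Fin (2*n) → Matrix (Fin (2^n)) (Fin (2^n)) ℂ) : Prop :=
  (∀ j, (c j).IsHermitian) ∧
  ∀ j k, c j * c k + c k * c j =
    if j = k then (2 : ℂ) • (1 : Matrix (Fin (2^n)) (Fin (2^n)) ℂ) else 0

/-- The first Majorana operator of mode `j` (i.e. `c_{2j-1}` in 1-based indexing). -/
def majA (n : ℕ) (c : Fin (2*n) → Matrix (Fin (2^n)) (Fin (2^n)) ℂ) (j : Fin n) :
    Matrix (Fin (2^n)) (Fin (2^n)) ℂ :=
  c ⟨2*j, by have := j.isLt; omega⟩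

/-- The second Majorana operator of mode `j` (i.e. `c_{2j}` in 1-based indexing). -/
def majB (n : ℕ) (c : Fin (2*n) → Matrix (Fin (2^n)) (Fin (2^n)) ℂ) (j : Fin n) :
    Matrix (Fin (2^n)) (Fin (2^n)) ℂ :=
  c ⟨2*j+1, by have := j.isLt; omega⟩

/-- Annihilation operator `a_j = (c_{2j-1} + i c_{2j})/2`. -/
def ann (n : ℕ) (c : Fin (2*n) → Matrix (Fin (2^n)) (Fin (2^n)) ℂ) (j : Fin n) :
    Matrix (Fin (2^n)) (Fin (2^n)) ℂ :=
  ((1:ℂ)/2) • (majA n c j + Complex.I • majB n c j)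

/-- Number operator `n_j = a_j† a_j`. -/
def num (n : ℕ) (c : Fin (2*n) → Matrix (Fin (2^n)) (Fin (2^n)) ℂ) (j : Fin n) :
    Matrix (Fin (2^n)) (Fin (2^n)) ℂ :=
  (ann n c j)ᴴ * ann n c j

/-- The fermionic Gaussian state `2^{-n} ∏_j (1 + i λ_j c̃_{2j-1} c̃_{2j})`,
where `c̃_i = Σ_k R_{ik} c_k`. -/
def gaussOf (n : ℕ) (c : Fin (2*n) → Matrix (Fin (2^n)) (Fin (2^n)) ℂ)
    (lam : Fin n → ℝ) (R : Matrix (Fin (2*n)) (Fin (2*n)) ℝ) :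
    Matrix (Fin (2^n)) (Fin (2^n)) ℂ :=
  ((2:ℂ)^n)⁻¹ •
    ((List.finRange n).map (fun j =>
      (1 : Matrix (Fin (2^n)) (Fin (2^n)) ℂ) +
        (Complex.I * (lam j : ℂ)) •
          ((∑ k, ((R ⟨2*j, by have := j.isLt; omega⟩ k : ℝ) : ℂ) • c k) *
           (∑ k, ((R ⟨2*j+1, by have := j.isLt; omega⟩ k : ℝ) : ℂ) • c k)))).prod

/-- A (generally mixed) fermionic Gaussian state. -/
def IsGaussianState (n : ℕ) (c : Fin (2*n) → Matrix (Fin (2^n)) (Fin (2^n)) ℂ)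
    (ρ : Matrix (Fin (2^n)) (Fin (2^n)) ℂ) : Prop :=
  ∃ (lam : Fin n → ℝ) (R : Matrix (Fin (2*n)) (Fin (2*n)) ℝ),
    (∀ j, lam j ∈ Set.Icc (-1:ℝ) 1) ∧ R * Rᵀ = 1 ∧ R.det = 1 ∧ ρ = gaussOf n c lam R

/-- A pure fermionic Gaussian state: all `λ_j = ±1`. -/
def IsPureGaussianState (n : ℕ) (c : Fin (2*n) → Matrix (Fin (2^n)) (Fin (2^n)) ℂ)
    (ρ : Matrix (Fin (2^n)) (Fin (2^n)) ℂ) : Prop :=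
  ∃ (lam : Fin n → ℝ) (R : Matrix (Fin (2*n)) (Fin (2*n)) ℝ),
    (∀ j, lam j = 1 ∨ lam j = -1) ∧ R * Rᵀ = 1 ∧ R.det = 1 ∧ ρ = gaussOf n c lam R

/-- The largest (real) eigenvalue of a Hermitian matrix. -/
def lamMax {m : Type} [Fintype m] [DecidableEq m] (M : Matrix m m ℂ) : ℝ :=
  sSup {x : ℝ | (x : ℂ) ∈ spectrum ℂ M}

/-! ### The final real inequality -/

lemma chain_bound (u v s w : ℝ) :
    u + v + s + (u ^ 2 + v ^ 2 + s ^ 2) / 2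
      ≤ 3.2165 - 2.1 + (1.05 * (u ^ 2 + v ^ 2) + w ^ 2 + 1.1 * s ^ 2
        - 0.2 * (u + v) * (w - s)) := by
  nlinarith [sq_nonneg (w - 0.1 * (u + v)), sq_nonneg (s + (u + v) / 6 - 5 / 6),
    sq_nonneg ((u + v) / 2 - 0.839), sq_nonneg (u - v)]

lemma z_bound (a b c d : ℝ) :
    -(a * b) - b * c - c * d ≤ 0.8 * a ^ 2 + 0.9 * b ^ 2 + 0.9 * c ^ 2 + 0.8 * d ^ 2 := by
  nlinarith [sq_nonneg (1.6 * a + b), sq_nonneg (b + c), sq_nonneg (1.6 * d + c),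
    sq_nonneg b, sq_nonneg c]

lemma energy_bound (G : Matrix (Fin 8) (Fin 8) ℝ) (hG : ∀ i j, G j i = -G i j)
    (hcon : ∀ v : Fin 8 → ℝ, ∑ k, (∑ j, G k j * v j) ^ 2 ≤ ∑ k, v k ^ 2) :
    (1 / 4 : ℝ) * ((-G 0 3 + G 1 2 + (-G 0 3) * G 1 2 + G 0 2 * G 1 3 - G 0 1 * G 2 3)
      + (-G 2 5 + G 3 4 + (-G 2 5) * G 3 4 + G 2 4 * G 3 5 - G 2 3 * G 4 5)
      + (-G 4 7 + G 5 6 + (-G 4 7) * G 5 6 + G 4 6 * G 5 7 - G 4 5 * G 6 7))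
    ≤ 1.6144 := by
  have hd : ∀ i, G i i = 0 := fun i => by have := hG i i; linarith
  have h0 := hcon ![1,0,0,0,0,0,0,0]
  have h1 := hcon ![0,1,0,0,0,0,0,0]
  have h2 := hcon ![0,0,1,0,0,0,0,0]
  have h3 := hcon ![0,0,0,1,0,0,0,0]
  have h4 := hcon ![0,0,0,0,1,0,0,0]
  have h5 := hcon ![0,0,0,0,0,1,0,0]
  have h6 := hcon ![0,0,0,0,0,0,1,0]
  have h7 := hcon ![0,0,0,0,0,0,0,1]
  have h04 := hcon ![1,0,0,0,1,0,0,0]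
  have h37 := hcon ![0,0,0,1,0,0,0,1]
  have h15 := hcon ![0,1,0,0,0,1,0,0]
  have h26 := hcon ![0,0,1,0,0,0,1,0]
  clear hcon
  simp [Fin.sum_univ_eight, hd,
    hG 0 1, hG 0 2, hG 0 3, hG 0 4, hG 0 5, hG 0 6, hG 0 7, hG 1 2, hG 1 3, hG 1 4, hG 1 5, hG 1 6, hG 1 7, hG 2 3, hG 2 4, hG 2 5, hG 2 6, hG 2 7, hG 3 4, hG 3 5, hG 3 6, hG 3 7, hG 4 5, hG 4 6, hG 4 7, hG 5 6, hG 5 7, hG 6 7] at h0 h1 h2 h3 h4 h5 h6 h7 h04 h37 h15 h26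
  linarith [sq_nonneg ((-G 0 1) + G 1 4),
    sq_nonneg ((-G 0 2) + G 2 4),
    sq_nonneg ((-G 0 5) + (-G 4 5)),
    sq_nonneg ((-G 0 6) + (-G 4 6)),
    sq_nonneg (G 1 3 + G 1 7),
    sq_nonneg (G 2 3 + G 2 7),
    sq_nonneg ((-G 3 5) + G 5 7),
    sq_nonneg ((-G 3 6) + G 6 7),
    sq_nonneg (G 0 1 + G 0 5),
    sq_nonneg ((-G 1 3) + G 3 5),
    sq_nonneg ((-G 1 4) + G 4 5),
    sq_nonneg ((-G 1 7) + (-G 5 7)),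
    sq_nonneg (G 0 2 + G 0 6),
    sq_nonneg ((-G 2 3) + G 3 6),
    sq_nonneg ((-G 2 4) + G 4 6),
    sq_nonneg ((-G 2 7) + (-G 6 7)),
    sq_nonneg (G 0 1),
    sq_nonneg (G 0 2),
    sq_nonneg (G 0 5),
    sq_nonneg (G 0 6),
    sq_nonneg (G 1 3),
    sq_nonneg (G 2 3),
    sq_nonneg (G 3 5),
    sq_nonneg (G 3 6),
    sq_nonneg (G 1 4),
    sq_nonneg (G 2 4),
    sq_nonneg (G 4 5),
    sq_nonneg (G 4 6),
    sq_nonneg (G 1 7),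
    sq_nonneg (G 2 7),
    sq_nonneg (G 5 7),
    sq_nonneg (G 6 7),
    sq_nonneg (G 0 4),
    sq_nonneg (G 3 7),
    sq_nonneg (G 1 5),
    sq_nonneg (G 2 6),
    sq_nonneg (G 0 3 + G 1 2),
    sq_nonneg (G 2 5 + G 3 4),
    sq_nonneg (G 4 7 + G 5 6),
    sq_nonneg (G 0 2 - G 1 3),
    sq_nonneg (G 2 4 - G 3 5),
    sq_nonneg (G 4 6 - G 5 7),
    chain_bound (-G 0 3) (-G 4 7) (G 3 4) (G 0 7),
    chain_bound (G 1 2) (G 5 6) (-G 2 5) (-G 1 6),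
    z_bound (G 0 1) (G 2 3) (G 4 5) (G 6 7)]

/-! ### Gaussian states: the linear commutation relation and Wick's rule -/

local notation "M16" => Matrix (Fin (2^4)) (Fin (2^4)) ℂ

lemma factor_comm (L N e f : M16) (t : ℂ) (he : e * e = 1) (hf : f * f = 1)
    (hef : f * e = -(e * f)) (h1 : Commute e L) (h2 : Commute e N) (h3 : Commute f L)
    (h4 : Commute f N) (ρ : M16) (hρ : ρ = L * (1 + t • (e * f)) * N) :
    ρ * e - e * ρ = (-t) • (ρ * f + f * ρ) ∧ ρ * f - f * ρ = t • (ρ * e + e * ρ) := by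
  have k1 : ρ * e = L * ((1 + t • (e * f)) * e) * N := by
    rw [hρ]; simp only [mul_assoc]; rw [h2.eq]
  have k2 : ρ * f = L * ((1 + t • (e * f)) * f) * N := by
    rw [hρ]; simp only [mul_assoc]; rw [h4.eq]
  have k3 : e * ρ = L * (e * (1 + t • (e * f))) * N := by
    rw [hρ]; simp only [← mul_assoc]; rw [h1.eq]
  have k4 : f * ρ = L * (f * (1 + t • (e * f))) * N := by
    rw [hρ]; simp only [← mul_assoc]; rw [h3.eq]
  have e1 : (1 + t • (e * f)) * e = e - t • f := by
    rw [add_mul, one_mul, smul_mul_assoc, mul_assoc, hef, mul_neg, ← mul_assoc, he, one_mul]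
    module
  have e2 : (1 + t • (e * f)) * f = f + t • e := by
    rw [add_mul, one_mul, smul_mul_assoc, mul_assoc, hf, mul_one]
  have e3 : e * (1 + t • (e * f)) = e + t • f := by
    rw [mul_add, mul_one, mul_smul_comm, ← mul_assoc, he, one_mul]
  have e4 : f * (1 + t • (e * f)) = f - t • e := by
    rw [mul_add, mul_one, mul_smul_comm, ← mul_assoc, hef, neg_mul, mul_assoc, hf, mul_one]
    module
  rw [k1, k2, k3, k4, e1, e2, e3, e4]
  simp only [mul_add, add_mul, mul_sub, sub_mul, mul_smul_comm, smul_mul_assoc]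
  constructor <;> module

lemma factor_trace (N e f : M16) (t : ℂ) 
    (hef : f * e = -(e * f)) (h2 : Commute e N) :
    ((1 + t • (e * f)) * N).trace = N.trace := by
  have : (e * f * N).trace = 0 := by
    have h : (e * f * N).trace = -(e * f * N).trace := by
      calc (e * f * N).trace = (e * (f * N)).trace := by rw [mul_assoc]
        _ = (f * N * e).trace := Matrix.trace_mul_comm _ _
        _ = (f * e * N).trace := by rw [mul_assoc, mul_assoc, h2.eq]
        _ = -(e * f * N).trace := by rw [hef, neg_mul, Matrix.trace_neg]
    linear_combination h / 2
  rw [add_mul, one_mul, smul_mul_assoc, Matrix.trace_add, Matrix.trace_smul, this]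
  simp

lemma commute_pair (e g h : M16) (t : ℂ) (h1 : g * e = -(e * g)) (h2 : h * e = -(e * h)) :
    Commute e (1 + t • (g * h)) := by
  apply Commute.add_right (Commute.one_right _)
  apply Commute.smul_right
  show e * (g * h) = g * h * e
  rw [mul_assoc, h2, mul_neg, ← mul_assoc, ← mul_assoc, h1, neg_mul, neg_neg]

lemma rotated_clifford (c : Fin (2*4) → M16) (hc : IsMajorana 4 c)
    (R : Matrix (Fin (2*4)) (Fin (2*4)) ℝ) (hR : R * Rᵀ = 1) (i j : Fin (2*4)) :
    (∑ k, ((R i k : ℝ) : ℂ) • c k) * (∑ k, ((R j k : ℝ) : ℂ) • c k)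
      + (∑ k, ((R j k : ℝ) : ℂ) • c k) * (∑ k, ((R i k : ℝ) : ℂ) • c k)
      = if i = j then (2 : ℂ) • (1 : M16) else 0 := by
  have hij : ∑ k, R i k * R j k = if i = j then 1 else 0 := by
    have := congrFun (congrFun hR i) j
    simpa [Matrix.mul_apply, Matrix.one_apply] using this
  have : (∑ k, ((R i k : ℝ) : ℂ) • c k) * (∑ k, ((R j k : ℝ) : ℂ) • c k)
      + (∑ k, ((R j k : ℝ) : ℂ) • c k) * (∑ k, ((R i k : ℝ) : ℂ) • c k)
      = ∑ k, ∑ l, (((R i k : ℝ) : ℂ) * ((R j l : ℝ) : ℂ)) • (c k * c l + c l * c k) := by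
    simp only [smul_add, Finset.sum_add_distrib]
    congr 1
    · rw [Finset.sum_comm]
      simp only [Finset.sum_mul, Finset.mul_sum, smul_mul_assoc, mul_smul_comm, Finset.smul_sum,
        smul_smul]
      refine Finset.sum_congr rfl fun k _ => Finset.sum_congr rfl fun l _ => by rw [mul_comm]
    · simp only [Finset.sum_mul, Finset.mul_sum, smul_mul_assoc, mul_smul_comm, Finset.smul_sum,
        smul_smul]
  rw [this]
  simp only [hc.2, smul_ite, smul_zero, Finset.sum_ite_eq, Finset.mem_univ, if_true]
  rw [← Finset.sum_smul]
  have h2 : ∑ k, ((R i k : ℝ) : ℂ) * ((R j k : ℝ) : ℂ) = if i = j then 1 else 0 := by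
    have := congrArg (fun x : ℝ => (x : ℂ)) hij
    push_cast at this
    rw [this]; split_ifs <;> simp
  rw [h2]; split_ifs <;> simp

/-- block covariance matrix -/
def blockG (l : Fin 4 → ℝ) : Matrix (Fin 8) (Fin 8) ℝ :=
  !![0, l 0, 0, 0, 0, 0, 0, 0;
     -l 0, 0, 0, 0, 0, 0, 0, 0;
     0, 0, 0, l 1, 0, 0, 0, 0;
     0, 0, -l 1, 0, 0, 0, 0, 0;
     0, 0, 0, 0, 0, l 2, 0, 0;
     0, 0, 0, 0, -l 2, 0, 0, 0;
     0, 0, 0, 0, 0, 0, 0, l 3;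
     0, 0, 0, 0, 0, 0, -l 3, 0]

lemma blockG_antisymm (l : Fin 4 → ℝ) : (blockG l)ᵀ = -blockG l := by
  ext i j
  fin_cases i <;> fin_cases j <;> simp [blockG]

lemma blockG_contr (l : Fin 4 → ℝ) (hl : ∀ j, l j ∈ Set.Icc (-1:ℝ) 1) (w : Fin 8 → ℝ) :
    (blockG l *ᵥ w) ⬝ᵥ (blockG l *ᵥ w) ≤ w ⬝ᵥ w := by
  have h : ∀ j, (l j) ^ 2 ≤ 1 := fun j => by
    have := hl j
    rw [Set.mem_Icc] at this
    nlinarith [this.1, this.2]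
  have h' : ∀ j (x : ℝ), l j * x * (l j * x) ≤ x * x := fun j x => by
    nlinarith [h j, sq_nonneg x]
  simp [blockG, Matrix.mulVec, dotProduct, Fin.sum_univ_eight]
  linarith [h' 0 (w 0), h' 0 (w 1), h' 1 (w 2), h' 1 (w 3), h' 2 (w 4), h' 2 (w 5),
    h' 3 (w 6), h' 3 (w 7)]

lemma rot_contr (R G : Matrix (Fin 8) (Fin 8) ℝ) (hR : R * Rᵀ = 1)
    (hG : ∀ w, (G *ᵥ w) ⬝ᵥ (G *ᵥ w) ≤ w ⬝ᵥ w) (v : Fin 8 → ℝ) :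
    ((Rᵀ * G * R) *ᵥ v) ⬝ᵥ ((Rᵀ * G * R) *ᵥ v) ≤ v ⬝ᵥ v := by
  have hR' : Rᵀ * R = 1 := mul_eq_one_comm.mp hR
  have key : ∀ (S : Matrix (Fin 8) (Fin 8) ℝ) (u : Fin 8 → ℝ), Sᵀ * S = 1 →
      (S *ᵥ u) ⬝ᵥ (S *ᵥ u) = u ⬝ᵥ u := by
    intro S u hS
    rw [Matrix.dotProduct_mulVec, ← Matrix.mulVec_transpose, Matrix.mulVec_mulVec, hS,
      Matrix.one_mulVec]
  rw [← Matrix.mulVec_mulVec, ← Matrix.mulVec_mulVec, key Rᵀ _ (by simpa using hR)]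
  calc _ ≤ _ := hG _
    _ = _ := key R v hR'

lemma gauss_props (c : Fin (2*4) → M16) (hc : IsMajorana 4 c) (ρ : M16)
    (hρ : IsGaussianState 4 c ρ) :
    ∃ G : Matrix (Fin 8) (Fin 8) ℝ, (∀ i j, G j i = -G i j) ∧
      (∀ v : Fin 8 → ℝ, ∑ k, (∑ j, G k j * v j) ^ 2 ≤ ∑ k, v k ^ 2) ∧
      ρ.trace = 1 ∧
      ∀ i : Fin 8, ρ * c i - c i * ρ =
        ∑ j : Fin 8, (-(Complex.I * (G i j : ℂ))) • (ρ * c j + c j * ρ) := by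
  obtain ⟨l, R, hl, hR, -, rfl⟩ := hρ
  have hR' : Rᵀ * R = 1 := mul_eq_one_comm.mp hR
  refine ⟨Rᵀ * blockG l * R, ?_, ?_, ?_⟩
  · intro i j
    have : (Rᵀ * blockG l * R)ᵀ = -(Rᵀ * blockG l * R) := by
      rw [Matrix.transpose_mul, Matrix.transpose_mul, blockG_antisymm]
      simp [mul_assoc]
    exact congrFun (congrFun this i) j
  · intro v
    have := rot_contr R (blockG l) hR (blockG_contr l hl) v
    simpa [dotProduct, Matrix.mulVec, sq] using this
  obtain ⟨d, hd⟩ : ∃ d : Fin 8 → M16, d = fun i => ∑ k, ((R i k : ℝ) : ℂ) • c k := ⟨_, rfl⟩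
  have hcl : ∀ i j, d i * d j + d j * d i = if i = j then (2 : ℂ) • (1 : M16) else 0 := by
    intro i j; rw [hd]; exact rotated_clifford c hc R hR i j
  have hsq : ∀ i, d i * d i = 1 := by
    intro i
    have := hcl i i
    rw [if_pos rfl, ← two_smul ℂ] at this
    exact smul_right_injective _ (two_ne_zero (α := ℂ)) this
  have hac : ∀ i j, i ≠ j → d i * d j = -(d j * d i) := by
    intro i j hij
    have := hcl i j
    rw [if_neg hij] at this
    exact eq_neg_of_add_eq_zero_left this
  have hcd : ∀ k, c k = ∑ i, ((R i k : ℝ) : ℂ) • d i := by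
    intro k
    rw [hd]
    simp only [Finset.smul_sum, smul_smul]
    rw [Finset.sum_comm]
    simp only [← Finset.sum_smul]
    have : ∀ y, ∑ x, ((R x k : ℝ) : ℂ) * ((R x y : ℝ) : ℂ) = if k = y then 1 else 0 := by
      intro y
      have := congrArg (fun x : ℝ => (x : ℂ)) (congrFun (congrFun hR' k) y)
      simp only [Matrix.mul_apply, Matrix.transpose_apply, Matrix.one_apply] at this
      push_cast at this
      rw [this]; split_ifs <;> simp
    simp [this]
  obtain ⟨p, hp⟩ : ∃ p : Fin 4 → M16, p = ![1 + (Complex.I * (l 0 : ℂ)) • (d 0 * d 1),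
    1 + (Complex.I * (l 1 : ℂ)) • (d 2 * d 3), 1 + (Complex.I * (l 2 : ℂ)) • (d 4 * d 5),
    1 + (Complex.I * (l 3 : ℂ)) • (d 6 * d 7)] := ⟨_, rfl⟩
  have p0 : p 0 = 1 + (Complex.I * (l 0 : ℂ)) • (d 0 * d 1) := by rw [hp]; rfl
  have p1 : p 1 = 1 + (Complex.I * (l 1 : ℂ)) • (d 2 * d 3) := by rw [hp]; rfl
  have p2 : p 2 = 1 + (Complex.I * (l 2 : ℂ)) • (d 4 * d 5) := by rw [hp]; rfl
  have p3 : p 3 = 1 + (Complex.I * (l 3 : ℂ)) • (d 6 * d 7) := by rw [hp]; rfl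
  have hgp : gaussOf 4 c l R = ((2:ℂ)^4)⁻¹ • (p 0 * p 1 * p 2 * p 3) := by
    rw [p0, p1, p2, p3, hd]
    unfold gaussOf
    congr 1
    simp only [List.finRange_succ, List.finRange_zero, List.map_cons, List.map_nil,
      List.prod_cons, List.prod_nil, mul_one, mul_assoc]
    rfl
  have c0 : ∀ i : Fin 8, i ≠ 0 → i ≠ 1 → Commute (d i) (p 0) := fun i h h' => by
    rw [p0]; exact commute_pair _ _ _ _ (hac _ _ h.symm) (hac _ _ h'.symm)
  have c1 : ∀ i : Fin 8, i ≠ 2 → i ≠ 3 → Commute (d i) (p 1) := fun i h h' => by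
    rw [p1]; exact commute_pair _ _ _ _ (hac _ _ h.symm) (hac _ _ h'.symm)
  have c2 : ∀ i : Fin 8, i ≠ 4 → i ≠ 5 → Commute (d i) (p 2) := fun i h h' => by
    rw [p2]; exact commute_pair _ _ _ _ (hac _ _ h.symm) (hac _ _ h'.symm)
  have c3 : ∀ i : Fin 8, i ≠ 6 → i ≠ 7 → Commute (d i) (p 3) := fun i h h' => by
    rw [p3]; exact commute_pair _ _ _ _ (hac _ _ h.symm) (hac _ _ h'.symm)
  rw [hgp]
  constructor
  · rw [Matrix.trace_smul, mul_assoc, mul_assoc]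
    conv_lhs => rw [p0]
    rw [factor_trace _ _ _ _ (hac 1 0 (by decide))
      ((c1 0 (by decide) (by decide)).mul_right ((c2 0 (by decide) (by decide)).mul_right
        (c3 0 (by decide) (by decide))))]
    conv_lhs => rw [p1]
    rw [factor_trace _ _ _ _ (hac 3 2 (by decide))
      ((c2 2 (by decide) (by decide)).mul_right (c3 2 (by decide) (by decide)))]
    conv_lhs => rw [p2]
    rw [factor_trace _ _ _ _ (hac 5 4 (by decide)) (c3 4 (by decide) (by decide))]
    conv_lhs => rw [p3, ← mul_one (1 + _)]
    rw [factor_trace _ _ _ _ (hac 7 6 (by decide)) (Commute.one_right _)]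
    simp [Matrix.trace_one]
    norm_num
  obtain ⟨σ, hσ⟩ : ∃ σ, σ = p 0 * p 1 * p 2 * p 3 := ⟨_, rfl⟩
  rw [← hσ]
  have f0 := factor_comm 1 (p 1 * p 2 * p 3) (d 0) (d 1) (Complex.I * (l 0 : ℂ)) (hsq _) (hsq _)
    (hac 1 0 (by decide)) (Commute.one_right _)
    (((c1 0 (by decide) (by decide)).mul_right (c2 0 (by decide) (by decide))).mul_right
        (c3 0 (by decide) (by decide))) (Commute.one_right _)
    (((c1 1 (by decide) (by decide)).mul_right (c2 1 (by decide) (by decide))).mul_right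
        (c3 1 (by decide) (by decide))) σ (by rw [hσ, ← p0]; simp only [mul_assoc, one_mul])
  have f1 := factor_comm (p 0) (p 2 * p 3) (d 2) (d 3) (Complex.I * (l 1 : ℂ)) (hsq _) (hsq _)
    (hac 3 2 (by decide)) (c0 2 (by decide) (by decide))
    ((c2 2 (by decide) (by decide)).mul_right (c3 2 (by decide) (by decide)))
    (c0 3 (by decide) (by decide))
    ((c2 3 (by decide) (by decide)).mul_right (c3 3 (by decide) (by decide))) σ
    (by rw [hσ, ← p1]; simp only [mul_assoc])
  have f2 := factor_comm (p 0 * p 1) (p 3) (d 4) (d 5) (Complex.I * (l 2 : ℂ)) (hsq _) (hsq _)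
    (hac 5 4 (by decide))
    ((c0 4 (by decide) (by decide)).mul_right (c1 4 (by decide) (by decide)))
    (c3 4 (by decide) (by decide))
    ((c0 5 (by decide) (by decide)).mul_right (c1 5 (by decide) (by decide)))
    (c3 5 (by decide) (by decide)) σ
    (by rw [hσ, ← p2])
  have f3 := factor_comm (p 0 * p 1 * p 2) 1 (d 6) (d 7) (Complex.I * (l 3 : ℂ)) (hsq _) (hsq _)
    (hac 7 6 (by decide))
    (((c0 6 (by decide) (by decide)).mul_right (c1 6 (by decide) (by decide))).mul_right
        (c2 6 (by decide) (by decide))) (Commute.one_right _)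
    (((c0 7 (by decide) (by decide)).mul_right (c1 7 (by decide) (by decide))).mul_right
        (c2 7 (by decide) (by decide))) (Commute.one_right _) σ
    (by rw [hσ, ← p3, mul_one])
  have hblock : ∀ i : Fin 8, σ * d i - d i * σ =
      ∑ j : Fin 8, (-(Complex.I * (blockG l i j : ℂ))) • (σ * d j + d j * σ) := by
    intro i
    fin_cases i
    · simpa [blockG, Fin.sum_univ_eight] using f0.1
    · simpa [blockG, Fin.sum_univ_eight] using f0.2
    · simpa [blockG, Fin.sum_univ_eight] using f1.1
    · simpa [blockG, Fin.sum_univ_eight] using f1.2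
    · simpa [blockG, Fin.sum_univ_eight] using f2.1
    · simpa [blockG, Fin.sum_univ_eight] using f2.2
    · simpa [blockG, Fin.sum_univ_eight] using f3.1
    · simpa [blockG, Fin.sum_univ_eight] using f3.2
  intro i
  have main : σ * c i - c i * σ =
      ∑ j : Fin 8, (-(Complex.I * ((Rᵀ * blockG l * R) i j : ℂ))) • (σ * c j + c j * σ) := by
    have lhs : σ * c i - c i * σ = ∑ a, ((R a i : ℝ) : ℂ) • (σ * d a - d a * σ) := by
      rw [hcd i]
      simp only [Finset.mul_sum, Finset.sum_mul, mul_smul_comm, smul_mul_assoc, smul_sub,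
        Finset.sum_sub_distrib]
    have hdc : ∀ b, σ * d b + d b * σ = ∑ j, ((R b j : ℝ) : ℂ) • (σ * c j + c j * σ) := by
      intro b
      rw [hd]
      simp only [Finset.mul_sum, Finset.sum_mul, mul_smul_comm, smul_mul_assoc, smul_add,
        Finset.sum_add_distrib]
    rw [lhs]
    simp only [hblock, hdc, Finset.smul_sum, smul_smul]
    conv_lhs =>
      enter [2, a]
      rw [Finset.sum_comm]
    rw [Finset.sum_comm]
    refine Finset.sum_congr rfl fun j _ => ?_
    simp only [← Finset.sum_smul]
    congr 1
    simp only [Matrix.mul_apply, Matrix.transpose_apply, Finset.sum_mul]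
    push_cast
    rw [Finset.mul_sum, ← Finset.sum_neg_distrib, Finset.sum_comm]
    refine Finset.sum_congr rfl fun a _ => ?_
    rw [Finset.mul_sum, ← Finset.sum_neg_distrib]
    refine Finset.sum_congr rfl fun b _ => ?_
    ring
  simp only [smul_mul_assoc, mul_smul_comm, ← smul_sub, ← smul_add, main]
  rw [Finset.smul_sum]
  refine Finset.sum_congr rfl fun j _ => ?_
  rw [smul_comm]

lemma maj_sq (c : Fin (2*4) → M16) (hc : IsMajorana 4 c) (i : Fin 8) : c i * c i = 1 := by
  have := hc.2 i i
  rw [if_pos rfl, ← two_smul ℂ] at this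
  exact smul_right_injective _ (two_ne_zero (α := ℂ)) this

lemma maj_anti (c : Fin (2*4) → M16) (hc : IsMajorana 4 c) (i j : Fin 8) (hij : i ≠ j) :
    c i * c j = -(c j * c i) := by
  have := hc.2 i j
  rw [if_neg hij] at this
  exact eq_neg_of_add_eq_zero_left this

/-- Two-point function. -/
lemma wick2 (c : Fin (2*4) → M16) (hc : IsMajorana 4 c) (ρ : M16)
    (G : Matrix (Fin 8) (Fin 8) ℝ) (htr : ρ.trace = 1)
    (hcom : ∀ i : Fin 8, ρ * c i - c i * ρ =
        ∑ j : Fin 8, (-(Complex.I * (G i j : ℂ))) • (ρ * c j + c j * ρ))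
    (i k : Fin 8) (hik : i ≠ k) :
    (ρ * (c i * c k)).trace = -(Complex.I * (G i k : ℂ)) := by
  have h := congrArg (fun X => (X * c k).trace) (hcom i)
  simp only [sub_mul, Matrix.trace_sub, Finset.sum_mul, Matrix.trace_sum, smul_mul_assoc,
    Matrix.trace_smul, add_mul, Matrix.trace_add] at h
  have e1 : ∀ j, (c j * ρ * c k).trace = (ρ * (c k * c j)).trace := by
    intro j
    rw [mul_assoc, Matrix.trace_mul_comm, mul_assoc]
  have e2 : ∀ j : Fin 8, (ρ * c j * c k).trace + (c j * ρ * c k).trace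
      = if j = k then 2 else 0 := by
    intro j
    rw [e1, mul_assoc, ← Matrix.trace_add, ← mul_add]
    erw [hc.2 j k]
    split_ifs
    · rw [mul_smul_comm, mul_one, Matrix.trace_smul, htr]; simp
    · simp
  have e3 : (c i * ρ * c k).trace = -(ρ * (c i * c k)).trace := by
    rw [e1, maj_anti c hc k i hik.symm, mul_neg, Matrix.trace_neg]
  rw [e3] at h
  simp only [e2] at h
  simp only [smul_eq_mul, mul_ite, mul_zero, Finset.sum_ite_eq', Finset.mem_univ, if_true] at h
  rw [mul_assoc] at h
  linear_combination h / 2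

/-- Four-point function. -/
lemma wick4 (c : Fin (2*4) → M16) (hc : IsMajorana 4 c) (ρ : M16)
    (G : Matrix (Fin 8) (Fin 8) ℝ) (htr : ρ.trace = 1)
    (hcom : ∀ i : Fin 8, ρ * c i - c i * ρ =
        ∑ j : Fin 8, (-(Complex.I * (G i j : ℂ))) • (ρ * c j + c j * ρ))
    (i k l m : Fin 8) (hik : i ≠ k) (hil : i ≠ l) (him : i ≠ m) (hkl : k ≠ l) (hkm : k ≠ m)
    (hlm : l ≠ m) :
    (ρ * (c i * c k * (c l * c m))).trace =
      -((G i k * G l m - G i l * G k m + G i m * G k l : ℝ) : ℂ) := by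
  have w := wick2 c hc ρ G htr hcom
  have h := congrArg (fun X => (X * (c k * c l * c m)).trace) (hcom i)
  simp only [sub_mul, Matrix.trace_sub, Finset.sum_mul, Matrix.trace_sum, smul_mul_assoc,
    Matrix.trace_smul, add_mul, Matrix.trace_add] at h
  have e1 : ∀ j, (c j * ρ * (c k * c l * c m)).trace = (ρ * (c k * c l * c m * c j)).trace := by
    intro j
    rw [mul_assoc, Matrix.trace_mul_comm, mul_assoc]
  have com : ∀ j : Fin 8, c j * (c k * c l * c m) + c k * c l * c m * c j
      = (if j = k then (2:ℂ) • (c l * c m) else 0) - (if j = l then (2:ℂ) • (c k * c m) else 0)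
        + (if j = m then (2:ℂ) • (c k * c l) else 0) := by
    intro j
    have hk := hc.2 j k
    have hl := hc.2 j l
    have hm := hc.2 j m
    have : c j * (c k * c l * c m) + c k * c l * c m * c j
      = (c j * c k + c k * c j) * (c l * c m) - c k * (c j * c l + c l * c j) * c m
        + c k * c l * (c j * c m + c m * c j) := by noncomm_ring
    rw [this]
    erw [hk, hl, hm]
    split_ifs <;> simp
  have e2 : ∀ j : Fin 8, (ρ * c j * (c k * c l * c m)).trace + (c j * ρ * (c k * c l * c m)).trace
      = (if j = k then 2 * -(Complex.I * (G l m : ℂ)) else 0)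
        - (if j = l then 2 * -(Complex.I * (G k m : ℂ)) else 0)
        + (if j = m then 2 * -(Complex.I * (G k l : ℂ)) else 0) := by
    intro j
    rw [e1, mul_assoc, ← Matrix.trace_add, ← mul_add, com, mul_add, mul_sub, Matrix.trace_add,
      Matrix.trace_sub]
    simp only [mul_ite, mul_zero, mul_smul_comm, apply_ite Matrix.trace, Matrix.trace_smul,
      Matrix.trace_zero, w l m hlm, w k m hkm, w k l hkl, smul_eq_mul]
  have e3 : (c i * ρ * (c k * c l * c m)).trace = -(ρ * (c i * c k * (c l * c m))).trace := by
    have h0 := com i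
    rw [if_neg hik, if_neg hil, if_neg him, sub_zero, add_zero] at h0
    rw [e1, eq_neg_of_add_eq_zero_right h0, mul_neg, Matrix.trace_neg]
    simp only [mul_assoc]
  rw [e3] at h
  simp only [e2] at h
  simp only [smul_eq_mul, mul_add, mul_sub, mul_ite, mul_zero, Finset.sum_ite_eq',
    Finset.mem_univ, if_true, Finset.sum_add_distrib, Finset.sum_sub_distrib] at h
  have e4 : (ρ * c i * (c k * c l * c m)).trace = (ρ * (c i * c k * (c l * c m))).trace := by
    simp only [mul_assoc]
  rw [e4] at h
  push_cast
  linear_combination h / 2 +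
    ((G i k : ℂ) * G l m - G i l * G k m + G i m * G k l) * Complex.I_mul_I

lemma annH (c : Fin (2*4) → M16) (hc : IsMajorana 4 c) (j : Fin 4) :
    (ann 4 c j)ᴴ = ((1:ℂ)/2) • (majA 4 c j - Complex.I • majB 4 c j) := by
  unfold ann majA majB
  rw [Matrix.conjTranspose_smul, Matrix.conjTranspose_add, Matrix.conjTranspose_smul,
    (hc.1 _).eq, (hc.1 _).eq]
  simp [sub_eq_add_neg]

/-- number operator from Majoranas -/
lemma num_form (A B : M16) (hA : A * A = 1) (hB : B * B = 1) (hAB : B * A = -(A * B)) :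
    (((1:ℂ)/2) • (A - Complex.I • B)) * (((1:ℂ)/2) • (A + Complex.I • B))
      = ((1:ℂ)/2) • (1 : M16) + (Complex.I / 2) • (A * B) := by
  simp only [smul_mul_assoc, mul_smul_comm, sub_mul, mul_add, hA, hB, hAB, smul_smul, smul_add,
    smul_sub, smul_neg]
  match_scalars
  · linear_combination (-1/4) * Complex.I_mul_I
  · ring

lemma hop_form (A B A' B' : M16) (h1 : A' * A = -(A * A')) (h2 : B' * B = -(B * B'))
    (h3 : B' * A = -(A * B')) (h4 : A' * B = -(B * A')) :
    (((1:ℂ)/2) • (A - Complex.I • B)) * (((1:ℂ)/2) • (A' + Complex.I • B'))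
    + (((1:ℂ)/2) • (A' - Complex.I • B')) * (((1:ℂ)/2) • (A + Complex.I • B))
      = (Complex.I / 2) • (A * B') - (Complex.I / 2) • (B * A') := by
  simp only [smul_mul_assoc, mul_smul_comm, sub_mul, mul_add, h1, h2, h3, h4, smul_smul, smul_add,
    smul_sub, smul_neg]
  match_scalars <;> ring

/-! ### The energy of a Gaussian state -/

lemma num_eq (c : Fin (2*4) → M16) (hc : IsMajorana 4 c) (j : Fin 4) :
    num 4 c j = ((1:ℂ)/2) • (1 : M16) + (Complex.I / 2) • (majA 4 c j * majB 4 c j) := by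
  unfold num
  rw [annH c hc]
  unfold ann
  refine num_form _ _ (maj_sq c hc _) (maj_sq c hc _) (maj_anti c hc _ _ ?_)
  intro h
  have := congrArg Fin.val h
  simp at this

lemma hop_eq (c : Fin (2*4) → M16) (hc : IsMajorana 4 c) (i j : Fin 4) (hij : i ≠ j) :
    (ann 4 c i)ᴴ * ann 4 c j + (ann 4 c j)ᴴ * ann 4 c i =
      (Complex.I / 2) • (majA 4 c i * majB 4 c j) - (Complex.I / 2) • (majB 4 c i * majA 4 c j) := by
  have hv : (i : ℕ) ≠ j := fun h => hij (Fin.ext h)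
  rw [annH c hc, annH c hc]
  unfold ann
  refine hop_form _ _ _ _ (maj_anti c hc _ _ ?_) (maj_anti c hc _ _ ?_) (maj_anti c hc _ _ ?_)
    (maj_anti c hc _ _ ?_) <;>
  · intro h
    have := congrArg Fin.val h
    simp at this
    omega

/-- one edge of the chain -/
lemma edge_trace (ρ A B A' B' : M16) (htr : ρ.trace = 1) (x y z w q : ℝ)
    (h1 : (ρ * (A * B')).trace = -(Complex.I * (x : ℂ)))
    (h2 : (ρ * (B * A')).trace = -(Complex.I * (y : ℂ)))
    (h3 : (ρ * (A * B)).trace = -(Complex.I * (z : ℂ)))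
    (h4 : (ρ * (A' * B')).trace = -(Complex.I * (w : ℂ)))
    (h5 : (ρ * (A * B * (A' * B'))).trace = -(q : ℂ)) (X N N' : M16)
    (hX : X = (Complex.I / 2) • (A * B') - (Complex.I / 2) • (B * A'))
    (hN : N = ((1:ℂ)/2) • (1 : M16) + (Complex.I / 2) • (A * B))
    (hN' : N' = ((1:ℂ)/2) • (1 : M16) + (Complex.I / 2) • (A' * B')) :
    (ρ * X).trace = ((((x - y) / 2 : ℝ)) : ℂ) ∧ (ρ * N).trace = ((((1 + z) / 2 : ℝ)) : ℂ) ∧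
    (ρ * N').trace = ((((1 + w) / 2 : ℝ)) : ℂ) ∧
    (ρ * (N * N')).trace = ((((1 + z + w + q) / 4 : ℝ)) : ℂ) := by
  refine ⟨?_, ?_, ?_, ?_⟩
  · rw [hX]
    simp only [mul_sub, mul_smul_comm, Matrix.trace_sub, Matrix.trace_smul, h1, h2, smul_eq_mul]
    push_cast
    linear_combination (-(x:ℂ) + y) / 2 * Complex.I_mul_I
  · rw [hN]
    simp only [mul_add, mul_smul_comm, Matrix.trace_add, Matrix.trace_smul, h3, smul_eq_mul,
      mul_one, htr]
    push_cast
    linear_combination (-(z:ℂ)) / 2 * Complex.I_mul_I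
  · rw [hN']
    simp only [mul_add, mul_smul_comm, Matrix.trace_add, Matrix.trace_smul, h4, smul_eq_mul,
      mul_one, htr]
    push_cast
    linear_combination (-(w:ℂ)) / 2 * Complex.I_mul_I
  · rw [hN, hN']
    simp only [add_mul, one_mul, smul_mul_assoc, mul_add, mul_smul_comm, Matrix.trace_add,
      Matrix.trace_smul, h3, h4, h5, smul_eq_mul, mul_one, htr]
    push_cast
    linear_combination (-(w:ℂ) - z - q) / 4 * Complex.I_mul_I

/-! ### The top eigenvector -/

lemma zero_of_self_neg (X : M16) (h : X = -X) : X = 0 := by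
  have h' : (2:ℂ) • X = 0 := by
    rw [two_smul]; nth_rewrite 1 [h]; simp
  exact (smul_eq_zero.mp h').resolve_left two_ne_zero

lemma strip (a A : Fin 4 → M16) (h1 : ∀ i j, a i * A j + A j * a i = if i = j then 1 else 0)
    (i : Fin 4) (Y : M16) (hY : A i * Y = Y * A i ∨ A i * Y = -(Y * A i))
    (h : a i * Y = 0) : Y = 0 := by
  have e : a i * (A i * Y) + A i * (a i * Y) = Y := by
    rw [← mul_assoc, ← mul_assoc, ← add_mul, h1, if_pos rfl, one_mul]
  rw [h, mul_zero, add_zero] at e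
  rcases hY with hY | hY
  · rw [← e, hY, ← mul_assoc, h, zero_mul]
  · rw [← e, hY, mul_neg, ← mul_assoc, h, zero_mul, neg_zero]

lemma vac_exists (a A : Fin 4 → M16)
    (h1 : ∀ i j, a i * A j + A j * a i = if i = j then 1 else 0)
    (h2 : ∀ i j, a i * a j = -(a j * a i)) :
    ∃ Q : M16, Q ≠ 0 ∧ ∀ i, a i * Q = 0 := by
  have hs : ∀ i, a i * a i = 0 := fun i => zero_of_self_neg _ (h2 i i)
  have hA : ∀ i j, i ≠ j → A i * a j = -(a j * A i) := fun i j h => by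
    have := h1 j i
    rw [if_neg h.symm] at this
    exact eq_neg_of_add_eq_zero_right this
  refine ⟨a 0 * (a 1 * (a 2 * a 3)), ?_, ?_⟩
  · intro h
    have q0 := strip a A h1 0 _ (Or.inr (by
      rw [← mul_assoc, hA 0 1 (by decide), neg_mul, mul_assoc, ← mul_assoc (A 0),
        hA 0 2 (by decide), neg_mul, mul_assoc, hA 0 3 (by decide)]
      simp only [mul_neg, neg_neg, mul_assoc])) h
    have q1 := strip a A h1 1 _ (Or.inl (by
      rw [← mul_assoc, hA 1 2 (by decide), neg_mul, mul_assoc, hA 1 3 (by decide)]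
      simp only [mul_neg, neg_neg, mul_assoc])) q0
    have q2 := strip a A h1 2 _ (Or.inr (hA 2 3 (by decide))) q1
    have q3 := strip a A h1 3 1 (Or.inl (by simp)) (by rw [q2, zero_mul])
    exact one_ne_zero q3
  · intro i
    fin_cases i
    · show a 0 * _ = 0
      rw [← mul_assoc, hs, zero_mul]
    · show a 1 * _ = 0
      rw [← mul_assoc, h2 1 0, neg_mul, mul_assoc, ← mul_assoc (a 1), hs]; simp
    · show a 2 * _ = 0
      rw [← mul_assoc, h2 2 0, neg_mul, mul_assoc, ← mul_assoc (a 2) (a 1), h2 2 1, neg_mul,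
        mul_assoc (a 1), ← mul_assoc (a 2) (a 2), hs]; simp
    · show a 3 * _ = 0
      rw [h2 2 3, ← mul_assoc, h2 3 0, neg_mul, mul_assoc, mul_neg, ← mul_assoc (a 1), h2 1 3,
        neg_mul, mul_assoc (a 3), mul_neg, mul_neg, mul_neg, ← mul_assoc (a 3) (a 3), hs]
      simp

lemma eig_exists (a A : Fin 4 → M16)
    (h1 : ∀ i j, a i * A j + A j * a i = if i = j then 1 else 0)
    (h2 : ∀ i j, a i * a j = -(a j * a i)) (h3 : ∀ i j, A i * A j = -(A j * A i))
    (s : ℂ) (hs : s * s = 3) (H : M16)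
    (hH : H = (-(1/2 : ℂ)) • (A 0 * a 1 + A 1 * a 0 + A 1 * a 2 + A 2 * a 1
          + A 2 * a 3 + A 3 * a 2)
        + (((1:ℂ)/4) • 1 - (A 0 * a 0) * (A 1 * a 1))
        + (((1:ℂ)/4) • 1 - (A 1 * a 1) * (A 2 * a 2))
        + (((1:ℂ)/4) • 1 - (A 2 * a 2) * (A 3 * a 3))
        + ((1:ℂ)/2) • (A 0 * a 0 - ((1:ℂ)/2) • 1)
        + (A 1 * a 1 - ((1:ℂ)/2) • 1)
        + (A 2 * a 2 - ((1:ℂ)/2) • 1)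
        + ((1:ℂ)/2) • (A 3 * a 3 - ((1:ℂ)/2) • 1)) :
    ∃ φ : M16, φ ≠ 0 ∧ H * φ = ((3 + 2 * s) / 4) • φ := by
  obtain ⟨Q, hQ, haQ⟩ := vac_exists a A h1 h2
  have r1 : ∀ i j (X : M16), a i * (A j * X) = (if i = j then X else 0) - A j * (a i * X) := by
    intro i j X
    have := congrArg (fun Y => Y * X) (h1 i j)
    simp only [add_mul, mul_assoc, ite_mul, one_mul, zero_mul] at this
    exact eq_sub_of_add_eq this
  have s1 : ∀ j k, a j * (A k * Q) = if j = k then Q else 0 := by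
    intro j k; rw [r1, haQ]; simp
  obtain ⟨ket, hket⟩ : ∃ ket : Fin 4 → Fin 4 → M16, ket = fun k l => A k * (A l * Q) := ⟨_, rfl⟩
  have s2 : ∀ j k l, a j * ket k l = (if j = k then A l * Q else 0)
      - (if j = l then A k * Q else 0) := by
    intro j k l
    rw [hket]
    simp only [r1 j k, s1, mul_ite, mul_zero]
  have s3 : ∀ i j k l, A i * (a j * ket k l) = (if j = k then ket i l else 0)
      - (if j = l then ket i k else 0) := by
    intro i j k l
    rw [s2, mul_sub, hket]
    simp only [mul_ite, mul_zero]
  have sw : ∀ k l, ket k l = -ket l k := by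
    intro k l
    rw [hket]
    simp only [← mul_assoc]
    rw [h3 k l, neg_mul]
  have sd : ∀ k, ket k k = 0 := fun k => zero_of_self_neg _ (sw k k)
  refine ⟨ket 0 2 + ket 1 3 + (1 - s) • (ket 0 3 + ket 1 2) + (s - 2) • (ket 0 1 + ket 2 3), ?_, ?_⟩
  · intro h
    have := congrArg (fun X => a 2 * (a 0 * X)) h
    simp [mul_add, s2, s1] at this
    exact hQ this
  · rw [hH]
    simp only [add_mul, sub_mul, mul_add, smul_mul_assoc, mul_smul_comm, one_mul, mul_assoc, s3,
      mul_sub, mul_ite, mul_zero]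
    simp [sd]
    rw [sw 1 0, sw 2 0, sw 3 0, sw 2 1, sw 3 1, sw 3 2]
    match_scalars <;> first | ring1 | linear_combination hs / 2 | linear_combination -hs / 2

lemma lamMax_ge (H φ : M16) (x : ℝ) (hφ : φ ≠ 0) (h : H * φ = (x : ℂ) • φ) : x ≤ lamMax H := by
  unfold lamMax
  apply le_csSup
  · apply Set.Finite.bddAbove
    exact (Matrix.finite_spectrum H).preimage Complex.ofReal_injective.injOn
  · show (x : ℂ) ∈ spectrum ℂ H
    rw [spectrum.mem_iff]
    intro hu
    apply hφ
    rw [← hu.mul_right_eq_zero, sub_mul, h, Algebra.algebraMap_eq_smul_one, smul_mul_assoc,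
      one_mul, sub_self]

lemma car_exp (A B A' B' : M16) :
    (((1:ℂ)/2) • (A + Complex.I • B)) * (((1:ℂ)/2) • (A' - Complex.I • B'))
    + (((1:ℂ)/2) • (A' - Complex.I • B')) * (((1:ℂ)/2) • (A + Complex.I • B))
     = ((1:ℂ)/4) • ((A * A' + A' * A) + (B * B' + B' * B)
        + Complex.I • (B * A' + A' * B) - Complex.I • (A * B' + B' * A)) := by
  simp only [smul_mul_assoc, mul_smul_comm, sub_mul, mul_sub, add_mul, mul_add, smul_smul,
    smul_add, smul_sub]
  match_scalars <;> first | ring1 | linear_combination (-1/4) * Complex.I_mul_I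

lemma car_exp' (A B A' B' : M16) :
    (((1:ℂ)/2) • (A + Complex.I • B)) * (((1:ℂ)/2) • (A' + Complex.I • B'))
    + (((1:ℂ)/2) • (A' + Complex.I • B')) * (((1:ℂ)/2) • (A + Complex.I • B))
     = ((1:ℂ)/4) • ((A * A' + A' * A) - (B * B' + B' * B)
        + Complex.I • (B * A' + A' * B) + Complex.I • (A * B' + B' * A)) := by
  simp only [smul_mul_assoc, mul_smul_comm, add_mul, mul_add, smul_smul,
    smul_add, smul_sub]
  match_scalars <;> first | ring1 | linear_combination (1/4) * Complex.I_mul_I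

lemma maj_rel (c : Fin (2*4) → M16) (hc : IsMajorana 4 c) (i j : Fin 4) :
    (majA 4 c i * majA 4 c j + majA 4 c j * majA 4 c i = if i = j then (2:ℂ) • 1 else 0) ∧
    (majB 4 c i * majB 4 c j + majB 4 c j * majB 4 c i = if i = j then (2:ℂ) • 1 else 0) ∧
    (majB 4 c i * majA 4 c j + majA 4 c j * majB 4 c i = 0) ∧
    (majA 4 c i * majB 4 c j + majB 4 c j * majA 4 c i = 0) := by
  unfold majA majB
  refine ⟨?_, ?_, ?_, ?_⟩ <;> rw [hc.2]
  · simp [Fin.ext_iff]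
  · simp [Fin.ext_iff]
  · rw [if_neg]; intro h; have := congrArg Fin.val h; simp at this; omega
  · rw [if_neg]; intro h; have := congrArg Fin.val h; simp at this; omega

lemma car1 (c : Fin (2*4) → M16) (hc : IsMajorana 4 c) (i j : Fin 4) :
    ann 4 c i * (ann 4 c j)ᴴ + (ann 4 c j)ᴴ * ann 4 c i = if i = j then 1 else 0 := by
  obtain ⟨h1, h2, h3, h4⟩ := maj_rel c hc i j
  rw [annH c hc]
  unfold ann
  rw [car_exp, h1, h2, h3, h4]
  split_ifs
  · module
  · simp

lemma car2 (c : Fin (2*4) → M16) (hc : IsMajorana 4 c) (i j : Fin 4) :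
    ann 4 c i * ann 4 c j = -(ann 4 c j * ann 4 c i) := by
  obtain ⟨h1, h2, h3, h4⟩ := maj_rel c hc i j
  apply eq_neg_of_add_eq_zero_left
  unfold ann
  rw [car_exp', h1, h2, h3, h4]
  simp

lemma car3 (c : Fin (2*4) → M16) (hc : IsMajorana 4 c) (i j : Fin 4) :
    (ann 4 c i)ᴴ * (ann 4 c j)ᴴ = -((ann 4 c j)ᴴ * (ann 4 c i)ᴴ) := by
  rw [← Matrix.conjTranspose_mul, ← Matrix.conjTranspose_mul, car2 c hc j i,
    Matrix.conjTranspose_neg]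

/-- every fermionic Gaussian state achieves at most a `0.99904` fraction of
the maximal eigenvalue of the 4-mode fermionic Heisenberg-chain Hamiltonian. -/
theorem heisenberg_gaussian_upper_bound
    (c : Fin (2*4) → Matrix (Fin (2^4)) (Fin (2^4)) ℂ) (hc : IsMajorana 4 c)
    (H : Matrix (Fin (2^4)) (Fin (2^4)) ℂ)
    (hH : H = (-(1/2 : ℂ)) • ((ann 4 c 0)ᴴ * ann 4 c 1 + (ann 4 c 1)ᴴ * ann 4 c 0
          + (ann 4 c 1)ᴴ * ann 4 c 2 + (ann 4 c 2)ᴴ * ann 4 c 1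
          + (ann 4 c 2)ᴴ * ann 4 c 3 + (ann 4 c 3)ᴴ * ann 4 c 2)
        + (((1:ℂ)/4) • 1 - num 4 c 0 * num 4 c 1)
        + (((1:ℂ)/4) • 1 - num 4 c 1 * num 4 c 2)
        + (((1:ℂ)/4) • 1 - num 4 c 2 * num 4 c 3)
        + ((1:ℂ)/2) • (num 4 c 0 - ((1:ℂ)/2) • 1)
        + (num 4 c 1 - ((1:ℂ)/2) • 1)
        + (num 4 c 2 - ((1:ℂ)/2) • 1)
        + ((1:ℂ)/2) • (num 4 c 3 - ((1:ℂ)/2) • 1)) :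
    ∀ ρ : Matrix (Fin (2^4)) (Fin (2^4)) ℂ, IsGaussianState 4 c ρ →
      (ρ * H).trace ≤ ((0.99904 * lamMax H : ℝ) : ℂ) := by
  intro ρ hρ
  obtain ⟨G, hG, hcon, htr, hcom⟩ := gauss_props c hc ρ hρ
  have hE := energy_bound G hG hcon
  have w2 := wick2 c hc ρ G htr hcom
  have w4 := wick4 c hc ρ G htr hcom
  -- lower bound on the largest eigenvalue
  have hs : ((Real.sqrt 3 : ℝ) : ℂ) * ((Real.sqrt 3 : ℝ) : ℂ) = 3 := by
    rw [← Complex.ofReal_mul, Real.mul_self_sqrt (by norm_num)]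
    norm_num
  obtain ⟨φ, hφ, hHφ⟩ := eig_exists (fun i => ann 4 c i) (fun i => (ann 4 c i)ᴴ) (car1 c hc)
    (car2 c hc) (car3 c hc) _ hs H hH
  have hl : (3 + 2 * Real.sqrt 3) / 4 ≤ lamMax H := by
    apply lamMax_ge H φ _ hφ
    rw [hHφ]
    push_cast
    rfl
  have hs3 : (1.732 : ℝ) ≤ Real.sqrt 3 := Real.le_sqrt_of_sq_le (by norm_num)
  have hlam : (1.6144 : ℝ) ≤ 0.99904 * lamMax H := by
    norm_num at hl hs3 ⊢
    linarith
  -- the energy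
  obtain ⟨x1, y1, z1, q1⟩ := edge_trace ρ (c 0) (c 1) (c 2) (c 3) htr _ _ _ _ _
    (w2 0 3 (by decide)) (w2 1 2 (by decide)) (w2 0 1 (by decide)) (w2 2 3 (by decide))
    (w4 0 1 2 3 (by decide) (by decide) (by decide) (by decide) (by decide) (by decide))
    _ _ _ (hop_eq c hc 0 1 (by decide)) (num_eq c hc 0) (num_eq c hc 1)
  obtain ⟨x2, y2, z2, q2⟩ := edge_trace ρ (c 2) (c 3) (c 4) (c 5) htr _ _ _ _ _
    (w2 2 5 (by decide)) (w2 3 4 (by decide)) (w2 2 3 (by decide)) (w2 4 5 (by decide))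
    (w4 2 3 4 5 (by decide) (by decide) (by decide) (by decide) (by decide) (by decide))
    _ _ _ (hop_eq c hc 1 2 (by decide)) (num_eq c hc 1) (num_eq c hc 2)
  obtain ⟨x3, y3, z3, q3⟩ := edge_trace ρ (c 4) (c 5) (c 6) (c 7) htr _ _ _ _ _
    (w2 4 7 (by decide)) (w2 5 6 (by decide)) (w2 4 5 (by decide)) (w2 6 7 (by decide))
    (w4 4 5 6 7 (by decide) (by decide) (by decide) (by decide) (by decide) (by decide))
    _ _ _ (hop_eq c hc 2 3 (by decide)) (num_eq c hc 2) (num_eq c hc 3)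
  have hval : (ρ * H).trace = (((1 / 4 : ℝ) *
      ((-G 0 3 + G 1 2 + (-G 0 3) * G 1 2 + G 0 2 * G 1 3 - G 0 1 * G 2 3)
      + (-G 2 5 + G 3 4 + (-G 2 5) * G 3 4 + G 2 4 * G 3 5 - G 2 3 * G 4 5)
      + (-G 4 7 + G 5 6 + (-G 4 7) * G 5 6 + G 4 6 * G 5 7 - G 4 5 * G 6 7)) : ℝ) : ℂ) := by
    rw [hH]
    rw [mul_add, Matrix.trace_add] at x1 x2 x3
    simp only [mul_add, mul_sub, mul_smul_comm, mul_one, Matrix.trace_add, Matrix.trace_sub,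
      Matrix.trace_smul, htr, q1, q2, q3, y1, y2, y3, z3, smul_eq_mul]
    push_cast at x1 x2 x3 ⊢
    linear_combination (-1/2 : ℂ) * (x1 + x2 + x3)
  rw [hval]
  exact_mod_cast hE.trans hlam

end
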